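/- arXiv:1401.7598 — 2 statements merged into one kernel-verified Lean document; each statement's English description precedes it below -/
import Mathlib

section
/- (Dyson's theorem) If h ≥ 1 and A_1, ..., A_h are sets of nonnegative integers each containing 0, then σ(A_1 + A_2 + ... + A_h) ≥ min(1, σ(A_1) + σ(A_2) + ... + σ(A_h)). -/
open Pointwise Filter

/-- The counting function of a set of nonnegative integers: the number of
positive elements of `A` that are at most `n`. -/
noncomputable def countingFn (A : Set ℕ) (n : ℕ) : ℕ := (A ∩ Set.Icc 1 n).ncard

/-- The Shnirel'man density `σ(A) = inf_{n ≥ 1} A(n)/n`. -/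
noncomputable def shnirelmanDensity (A : Set ℕ) : ℝ :=
  ⨅ n : {n : ℕ // 0 < n}, (countingFn A (n : ℕ) : ℝ) / ((n : ℕ) : ℝ)

/-- The lower asymptotic density `d_L(A) = liminf_{n → ∞} A(n)/n`. -/
noncomputable def lowerDensity (A : Set ℕ) : ℝ :=
  liminf (fun n : ℕ => (countingFn A n : ℝ) / (n : ℝ)) atTop

/-- `A` is an additive basis of order `h`: every nonnegative integer is the
sum of exactly `h` elements of `A` (with repetitions allowed). -/
def IsBasisOfOrder (A : Set ℕ) (h : ℕ) : Prop :=
  ∀ n : ℕ, ∃ c : Fin h → ℕ, (∀ i, c i ∈ A) ∧ ∑ i, c i = n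

/-- `A` is an asymptotic basis of order `h`: every sufficiently large integer
is the sum of exactly `h` elements of `A` (with repetitions allowed). -/
def IsAsymptoticBasisOfOrder (A : Set ℕ) (h : ℕ) : Prop :=
  ∀ᶠ n : ℕ in atTop, ∃ c : Fin h → ℕ, (∀ i, c i ∈ A) ∧ ∑ i, c i = n

/-- A minimal asymptotic basis of order `h` is an asymptotic basis of order `h`
no proper subset of which is an asymptotic basis of order `h`. -/
def IsMinimalAsymptoticBasisOfOrder (A : Set ℕ) (h : ℕ) : Prop :=
  IsAsymptoticBasisOfOrder A h ∧
    ∀ B : Set ℕ, B ⊂ A → ¬ IsAsymptoticBasisOfOrder B h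

/-- A maximal asymptotic nonbasis of order `h` is a set that is not an
asymptotic basis of order `h`, but such that adjoining any element outside it
produces an asymptotic basis of order `h`. -/
def IsMaximalAsymptoticNonbasisOfOrder (A : Set ℕ) (h : ℕ) : Prop :=
  ¬ IsAsymptoticBasisOfOrder A h ∧
    ∀ b : ℕ, b ∉ A → IsAsymptoticBasisOfOrder (A ∪ {b}) h

/-!
Mann's counting argument. If `A + B` meets `[0, n]` only inside `A`, cut `[1, n]` just before the
least positive element `b ≤ n` of `B`: then `A(n) ≥ A(b - 1) + 1 + A(n - b)`, because `b + A` stays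
in `A`. Since `B(b - 1) = 0`, induction on `n` turns `A(m) + B(m) ≥ γ m` into `A(n) ≥ γ n`.
Otherwise take the least `e ∈ A` for which `e + B` leaves `A` within `[0, n]` and replace `(A, B)`
by its Dyson transform at `e`: the sumset does not grow, `B(n)` drops, and the minimality of `e`
preserves the inequality `A(m) + B(m) ≥ γ m` for `m ≤ n`, so induction on `B(n)` gives Mann's
theorem for two sets. Several sets are added one at a time.
-/

section CountingFn

variable {A B : Set ℕ} {m n : ℕ}

lemma finite_inter_Icc_one (A : Set ℕ) (n : ℕ) : (A ∩ Set.Icc 1 n).Finite :=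
  (Set.finite_Icc 1 n).inter_of_right A

lemma countingFn_eq_card_filter (A : Set ℕ) [DecidablePred (· ∈ A)] (n : ℕ) :
    countingFn A n = Finset.card {a ∈ Finset.Ioc 0 n | a ∈ A} := by
  rw [countingFn, ← Set.ncard_coe_finset]
  congr 1
  ext a
  simp [Nat.one_le_iff_ne_zero, Nat.pos_iff_ne_zero, and_comm, and_left_comm]

lemma countingFn_eq_count (A : Set ℕ) [DecidablePred (· + 1 ∈ A)] (n : ℕ) :
    countingFn A n = Nat.count (· + 1 ∈ A) n := by
  rw [Nat.count_eq_card_filter_range, ← Set.ncard_coe_finset,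
    ← Set.ncard_image_of_injective _ (add_left_injective 1), countingFn]
  congr 1
  ext a
  cases a <;> simp [and_comm]

@[simp]
lemma countingFn_zero (A : Set ℕ) : countingFn A 0 = 0 := by
  simp [countingFn]

lemma countingFn_le_of_translate {e : ℕ} (h : ∀ a ∈ A, a ≤ m → e + a ∈ B ∧ e + a ≤ n) :
    countingFn A m ≤ countingFn B n := by
  refine Set.ncard_le_ncard_of_injOn (e + ·) ?_ (add_right_injective e).injOn
    (finite_inter_Icc_one B n)
  rintro a ⟨haA, ha, ham⟩
  exact ⟨(h a haA ham).1, Nat.le_add_left_of_le ha, (h a haA ham).2⟩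

lemma countingFn_mono (h : ∀ a ∈ A, a ≤ m → a ∈ B) (hmn : m ≤ n) :
    countingFn A m ≤ countingFn B n :=
  countingFn_le_of_translate (e := 0) fun a ha ham => by
    simpa using ⟨h a ha ham, ham.trans hmn⟩

lemma countingFn_pos {a : ℕ} (ha : a ∈ A) (ha0 : 0 < a) (han : a ≤ n) : 0 < countingFn A n :=
  (Set.ncard_pos (finite_inter_Icc_one A n)).mpr ⟨a, ha, ha0, han⟩

lemma countingFn_inter_add_diff (A B : Set ℕ) (n : ℕ) :
    countingFn (A ∩ B) n + countingFn (A \ B) n = countingFn A n := by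
  simp only [countingFn, Set.inter_right_comm A B, Set.sdiff_inter_right_comm,
    Set.ncard_inter_add_ncard_sdiff_eq_ncard _ B (finite_inter_Icc_one A n)]

lemma countingFn_add (A : Set ℕ) (m k : ℕ) :
    countingFn A (m + k) = countingFn A m + countingFn ((m + ·) ⁻¹' A) k := by
  classical
  simp only [countingFn_eq_count, Nat.count_add, Set.mem_preimage, add_assoc]

lemma countingFn_succ_of_mem (h : n + 1 ∈ A) : countingFn A (n + 1) = countingFn A n + 1 := by
  classical
  simp only [countingFn_eq_count, Nat.count_succ, if_pos h]

lemma countingFn_succ_of_notMem (h : n + 1 ∉ A) : countingFn A (n + 1) = countingFn A n := by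
  classical
  simp only [countingFn_eq_count, Nat.count_succ, if_neg h, add_zero]

lemma exists_succ_mem_of_countingFn_ne_zero (h : countingFn A n ≠ 0) :
    ∃ c < n, c + 1 ∈ A ∧ countingFn A c = 0 := by
  induction n with
  | zero => simp at h
  | succ n ih =>
    by_cases h0 : countingFn A n = 0
    · refine ⟨n, n.lt_succ_self, ?_, h0⟩
      by_contra hn
      exact h (by rw [countingFn_succ_of_notMem hn, h0])
    · obtain ⟨c, hcn, hc⟩ := ih h0
      exact ⟨c, hcn.trans n.lt_succ_self, hc⟩

lemma countingFn_add_one_add_le {c k : ℕ} (h0 : 0 ∈ A) (h : ∀ a ∈ A, a ≤ k → c + 1 + a ∈ A) :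
    countingFn A c + 1 + countingFn A k ≤ countingFn A (c + 1 + k) := by
  have hc : c + 1 ∈ A := h 0 h0 k.zero_le
  rw [countingFn_add, countingFn_succ_of_mem hc]
  gcongr
  exact countingFn_mono h le_rfl

end CountingFn

section DysonTransform

variable {M : Type*}

/-- The first component of the Dyson transform of `(A, B)` at `e`: the set `A` enlarged by `e + B`.
Together with `dysonSnd` it is the analogue of `Finset.addDysonETransform` for arbitrary subsets of
an additive structure that may lack subtraction. -/
def dysonFst [Add M] (e : M) (A B : Set M) : Set M := A ∪ (e + ·) '' B

/-- The second component of the Dyson transform of `(A, B)` at `e`: the set of those `b ∈ B` for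
which `e + b` already lies in `A`. -/
def dysonSnd [Add M] (e : M) (A B : Set M) : Set M := B ∩ (e + ·) ⁻¹' A

lemma dysonFst_add_dysonSnd_subset [AddCommSemigroup M] (e : M) (A B : Set M) :
    dysonFst e A B + dysonSnd e A B ⊆ A + B := by
  rintro _ ⟨_, ha | ⟨b', hb', rfl⟩, b, ⟨hb, heb⟩, rfl⟩
  · exact Set.add_mem_add ha hb
  · exact ⟨e + b, heb, b', hb', add_right_comm e b b'⟩

variable {A B : Set ℕ} {e m n : ℕ}

lemma countingFn_dysonSnd_lt {b : ℕ} (he : e ∈ A) (hb : b ∈ B) (hbn : b ≤ n) (heb : e + b ∉ A) :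
    countingFn (dysonSnd e A B) n < countingFn B n := by
  have hb0 : 0 < b := Nat.pos_of_ne_zero fun h => heb (by simpa [h] using he)
  rw [← countingFn_inter_add_diff B ((e + ·) ⁻¹' A) n]
  exact Nat.lt_add_of_pos_right (countingFn_pos ⟨hb, heb⟩ hb0 hbn)

/-- The elements removed from `B` reappear, translated by `e`, as new elements of
`dysonFst e A B`. -/
lemma countingFn_add_countingFn_le_dyson {t : ℕ} (htm : t ≤ m)
    (h : ∀ b ∈ B, e + b ∉ A → b ≤ t → e + b ≤ m) :
    countingFn A m + countingFn B t ≤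
      countingFn (dysonFst e A B) m + countingFn (dysonSnd e A B) m := by
  have hfst : countingFn A m + countingFn (dysonFst e A B \ A) m =
      countingFn (dysonFst e A B) m := by
    rw [← countingFn_inter_add_diff (dysonFst e A B) A, dysonFst, Set.union_inter_cancel_left]
  have hsnd : countingFn (dysonSnd e A B) t + countingFn (B \ (e + ·) ⁻¹' A) t = countingFn B t :=
    countingFn_inter_add_diff _ _ _
  have hremoved : countingFn (B \ (e + ·) ⁻¹' A) t ≤ countingFn (dysonFst e A B \ A) m :=
    countingFn_le_of_translate fun b hb hbt =>
      ⟨⟨Or.inr ⟨b, hb.1, rfl⟩, hb.2⟩, h b hb.1 hb.2 hbt⟩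
  have hmono : countingFn (dysonSnd e A B) t ≤ countingFn (dysonSnd e A B) m :=
    countingFn_mono (fun _ hb _ => hb) htm
  omega

end DysonTransform

section Mann

-- For `f m = γ * m` the hypothesis `hf` below says `γ ≤ 1`.
variable {f : ℕ → ℝ} {A B : Set ℕ} {e m n : ℕ}

lemma le_countingFn_of_add_mem (hf : ∀ i j, f (i + 1 + j) ≤ f i + 1 + f j) (hA : 0 ∈ A)
    (hAB : ∀ m ≤ n, f m ≤ countingFn A m + countingFn B m)
    (hclosed : ∀ a ∈ A, ∀ b ∈ B, a + b ≤ n → a + b ∈ A) :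
    f n ≤ countingFn A n := by
  induction n using Nat.strong_induction_on with
  | _ n ih =>
    by_cases hBn : countingFn B n = 0
    · simpa [hBn] using hAB n le_rfl
    · obtain ⟨c, hcn, hcB, hBc⟩ := exists_succ_mem_of_countingFn_ne_zero hBn
      obtain ⟨k, rfl⟩ := Nat.exists_eq_add_of_le (Nat.succ_le_of_lt hcn)
      have hc : f c ≤ countingFn A c := by simpa [hBc] using hAB c hcn.le
      have hk : f k ≤ countingFn A k :=
        ih k (by omega) (fun m hm => hAB m (by omega))
          (fun a ha b hb hab => hclosed a ha b hb (by omega))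
      have hsplit : (countingFn A c + 1 + countingFn A k : ℝ) ≤ countingFn A (c + 1 + k) := by
        exact_mod_cast countingFn_add_one_add_le hA fun a ha hak =>
          add_comm a (c + 1) ▸ hclosed a ha (c + 1) hcB (by omega)
      linarith [hf c k]

lemma le_countingFn_dyson (hf : ∀ i j, f (i + 1 + j) ≤ f i + 1 + f j) (hA : 0 ∈ A) (he : e ∈ A)
    (hAB : ∀ m ≤ n, f m ≤ countingFn A m + countingFn B m)
    (hmin : ∀ a ∈ A, a < e → ∀ b ∈ B, a + b ≤ n → a + b ∈ A) (hmn : m ≤ n) :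
    f m ≤ countingFn (dysonFst e A B) m + countingFn (dysonSnd e A B) m := by
  by_cases hlost : ∃ d, d ∈ B ∧ e + d ∉ A ∧ d ≤ m ∧ m < e + d
  · -- The translate of such a `d` falls beyond `m`; cut `[1, m]` just before the least such `d`.
    classical
    obtain ⟨hdB, hdA, hdm, hmd⟩ := Nat.find_spec hlost
    have hleast : ∀ b ∈ B, e + b ∉ A → b < Nat.find hlost → e + b ≤ m := by
      intro b hb heb hbd
      by_contra! hmb
      exact Nat.find_min hlost hbd ⟨hb, heb, by omega, hmb⟩
    generalize Nat.find hlost = d at *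
    obtain ⟨c, rfl⟩ := Nat.exists_eq_succ_of_ne_zero (n := d) (fun h => hdA (by simpa [h] using he))
    obtain ⟨k, rfl⟩ := Nat.exists_eq_add_of_le hdm
    have hc : f c ≤ countingFn A c + countingFn B c := hAB c (by omega)
    have hk : f k ≤ countingFn A k :=
      le_countingFn_of_add_mem hf hA (fun i hi => hAB i (by omega))
        (fun a ha b hb hab => hmin a ha (by omega) b hb (by omega))
    have hsplit : (countingFn A c + 1 + countingFn A k : ℝ) ≤ countingFn A (c + 1 + k) := by
      exact_mod_cast countingFn_add_one_add_le hA fun a ha hak =>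
        add_comm a (c + 1) ▸ hmin a ha (by omega) (c + 1) hdB (by omega)
    have htransform : (countingFn A (c + 1 + k) + countingFn B c : ℝ) ≤
        countingFn (dysonFst e A B) (c + 1 + k) + countingFn (dysonSnd e A B) (c + 1 + k) := by
      exact_mod_cast countingFn_add_countingFn_le_dyson (by omega)
        (fun b hb heb hbc => hleast b hb heb (by omega))
    linarith [hf c k]
  · push Not at hlost
    refine (hAB m hmn).trans ?_
    exact_mod_cast countingFn_add_countingFn_le_dyson le_rfl hlost

theorem le_countingFn_add (hf : ∀ i j, f (i + 1 + j) ≤ f i + 1 + f j) (hA : 0 ∈ A) (hB : 0 ∈ B)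
    (hAB : ∀ m ≤ n, f m ≤ countingFn A m + countingFn B m) :
    f n ≤ countingFn (A + B) n := by
  induction hk : countingFn B n using Nat.strong_induction_on generalizing A B with
  | _ k ih =>
    subst hk
    by_cases hclosed : ∀ a ∈ A, ∀ b ∈ B, a + b ≤ n → a + b ∈ A
    · refine (le_countingFn_of_add_mem hf hA hAB hclosed).trans ?_
      exact_mod_cast countingFn_mono (fun a ha _ => Set.subset_add_left A hB ha) le_rfl
    · push Not at hclosed
      obtain ⟨e, ⟨heA, b, hbB, hebn, heb⟩, hleast⟩ :=
        wellFounded_lt.has_min {a | a ∈ A ∧ ∃ b ∈ B, a + b ≤ n ∧ a + b ∉ A} hclosed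
      have hmin : ∀ a ∈ A, a < e → ∀ b ∈ B, a + b ≤ n → a + b ∈ A := by
        intro a ha hae b hb habn
        by_contra hab
        exact hleast a ⟨ha, b, hb, habn, hab⟩ hae
      have hdyson : f n ≤ countingFn (dysonFst e A B + dysonSnd e A B) n :=
        ih _ (countingFn_dysonSnd_lt heA hbB (by omega) heb) (Or.inl hA) ⟨hB, by simpa using heA⟩
          (fun _ hm => le_countingFn_dyson hf hA heA hAB hmin hm) rfl
      refine hdyson.trans ?_
      exact_mod_cast
        countingFn_mono (fun x hx _ => dysonFst_add_dysonSnd_subset e A B hx) le_rfl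

end Mann

section Density

lemma shnirelmanDensity_eq_schnirelmannDensity (A : Set ℕ) [DecidablePred (· ∈ A)] :
    shnirelmanDensity A = schnirelmannDensity A := by
  simp only [shnirelmanDensity, schnirelmannDensity, countingFn_eq_card_filter]

lemma shnirelmanDensity_nonneg (A : Set ℕ) : 0 ≤ shnirelmanDensity A := by
  classical
  rw [shnirelmanDensity_eq_schnirelmannDensity]
  exact schnirelmannDensity_nonneg

lemma le_shnirelmanDensity_iff {A : Set ℕ} {γ : ℝ} :
    γ ≤ shnirelmanDensity A ↔ ∀ n : ℕ, γ * n ≤ countingFn A n := by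
  classical
  rw [shnirelmanDensity_eq_schnirelmannDensity, le_schnirelmannDensity_iff]
  refine forall_congr' fun n => ?_
  rcases n.eq_zero_or_pos with rfl | hn
  · simp
  · rw [countingFn_eq_card_filter, le_div_iff₀ (Nat.cast_pos.mpr hn)]
    exact forall_prop_of_true hn

theorem min_one_add_le_shnirelmanDensity_add {A B : Set ℕ} (hA : 0 ∈ A) (hB : 0 ∈ B) :
    min 1 (shnirelmanDensity A + shnirelmanDensity B) ≤ shnirelmanDensity (A + B) := by
  set γ := min 1 (shnirelmanDensity A + shnirelmanDensity B)
  have hγ : γ ≤ 1 := min_le_left _ _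
  refine le_shnirelmanDensity_iff.mpr fun n => le_countingFn_add (f := fun m => γ * m) ?_ hA hB ?_
  · intro i j
    push_cast
    linarith
  · intro m _
    calc γ * m ≤ (shnirelmanDensity A + shnirelmanDensity B) * m := by
          gcongr
          exact min_le_right _ _
      _ = shnirelmanDensity A * m + shnirelmanDensity B * m := add_mul _ _ _
      _ ≤ countingFn A m + countingFn B m :=
          add_le_add (le_shnirelmanDensity_iff.mp le_rfl m) (le_shnirelmanDensity_iff.mp le_rfl m)

theorem min_one_sum_le_shnirelmanDensity_sum {ι : Type*} {s : Finset ι} {A : ι → Set ℕ}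
    (hA : ∀ i ∈ s, 0 ∈ A i) :
    min 1 (∑ i ∈ s, shnirelmanDensity (A i)) ≤ shnirelmanDensity (∑ i ∈ s, A i) := by
  classical
  induction s using Finset.induction_on with
  | empty => simpa using shnirelmanDensity_nonneg _
  | insert i s hi ih =>
    rw [Finset.forall_mem_insert] at hA
    have hsum : 0 ∈ ∑ j ∈ s, A j := by
      simpa using Set.finsetSum_mem_finsetSum s A (fun _ => 0) hA.2
    rw [Finset.sum_insert hi, Finset.sum_insert hi]
    calc min 1 (shnirelmanDensity (A i) + ∑ j ∈ s, shnirelmanDensity (A j))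
        ≤ min 1 (shnirelmanDensity (A i) + min 1 (∑ j ∈ s, shnirelmanDensity (A j))) := by
          grind [shnirelmanDensity_nonneg (A i)]
      _ ≤ min 1 (shnirelmanDensity (A i) + shnirelmanDensity (∑ j ∈ s, A j)) := by
          gcongr
          exact ih hA.2
      _ ≤ shnirelmanDensity (A i + ∑ j ∈ s, A j) :=
          min_one_add_le_shnirelmanDensity_add hA.1 hsum

end Density

theorem dyson_theorem (h : ℕ) (hh : 1 ≤ h) (A : Fin h → Set ℕ)
    (hA : ∀ i, 0 ∈ A i) :
    shnirelmanDensity (∑ i, A i) ≥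
      min 1 (∑ i, shnirelmanDensity (A i)) :=
  min_one_sum_le_shnirelmanDensity_sum fun i _ => hA i
end

section
/- (Nathanson–Sárközy) If h ≥ 2 and A is a minimal asymptotic basis of order h, then the lower asymptotic density of A satisfies d_L(A) ≤ 1/h. -/
open Pointwise Filter

/-!
Suppose `(k + 1) * d_L(A) > 1`, where `k + 1 = h`. Choose `a ≠ a'` in `A` congruent modulo
`N = G!`; replacing `a` by `a'` in a representation preserves its residue, so every residue class
modulo `N` is still met by sums of `k + 1` elements of `A \ {a}`. Hence `a` can be removed as soon
as the following weak form of Kneser's theorem is known: if `k + 1` sets containing `0` have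
counting functions adding up to at least `(1 + ε) m` for all large `m`, then their sumset contains
all large multiples of `G!`, where `G` depends only on `ε` and `k`.

Dyson transforms turn the first set into a subset `U` of the sumset, and since `U` has at most `m`
elements below `m`, at least `δ m` numbers `p < m`, with `δ = ε / k`, satisfy `p + U ⊆ U` as far as
`[0, m)` can see. Modulo `N` such a `p` stabilizes the residues of `U`. So if `w ≥ p` is a *hole*, a
number outside `U` in a residue class that meets `U`, then `w - p` is again a hole.

Holes have density zero. Let `θ` be their upper density. By pigeonhole two such `p` differ by some
`d < G`, and `d ∣ N`; in an initial segment where the density of holes is nearly `θ` this leaves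
room for only few places at which the shift by `N` enters the set of holes. But a gap between
consecutive `p` can contain holes only near such a place, so the number of holes below `x` is at
most `θ (1 - δ ^ 2) x` up to a small error, and `θ > 0` is impossible. Finally there is no large
hole `n` at all, because each of about `δ n` numbers `p` would give another hole `n - p`.
-/

section Counting

/-- The number of elements of `S` that are less than `n`. Zero is counted, so that a translation
by `b` carries `[0, n)` onto `[b, b + n)` without boundary terms. -/
noncomputable def countBelow (S : Set ℕ) (n : ℕ) : ℕ := (S ∩ Set.Iio n).ncard

/-- The upper asymptotic density `limsup S(n)/n` of a set of natural numbers. -/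
noncomputable def upperDensity (S : Set ℕ) : ℝ :=
  limsup (fun n : ℕ => (countBelow S n : ℝ) / n) atTop

variable (S : Set ℕ)

lemma countBelow_le (n : ℕ) : countBelow S n ≤ n :=
  (Set.ncard_le_ncard Set.inter_subset_right (Set.finite_Iio n)).trans_eq (Set.ncard_Iio_nat n)

lemma countBelow_mono : Monotone (countBelow S) := fun _ _ h =>
  Set.ncard_le_ncard (Set.inter_subset_inter_right S (Set.Iio_subset_Iio h))

lemma countBelow_add (b n : ℕ) :
    countBelow S (b + n) = countBelow S b + countBelow {x | b + x ∈ S} n := by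
  have himage : (b + ·) '' ({x | b + x ∈ S} ∩ Set.Iio n) = S ∩ Set.Ico b (b + n) := by
    ext y
    constructor
    · rintro ⟨x, ⟨hx, hxn⟩, rfl⟩
      exact ⟨hx, Nat.le_add_right b x, Nat.add_lt_add_left hxn b⟩
    · rintro ⟨hy, hby, hyn⟩
      obtain ⟨x, rfl⟩ := Nat.exists_eq_add_of_le hby
      exact ⟨x, ⟨hy, Nat.lt_of_add_lt_add_left hyn⟩, rfl⟩
  have hdisj : Disjoint (S ∩ Set.Iio b) (S ∩ Set.Ico b (b + n)) :=
    Set.disjoint_left.mpr fun _ hx hx' => hx'.2.1.not_gt hx.2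
  have hshift : countBelow {x | b + x ∈ S} n = (S ∩ Set.Ico b (b + n)).ncard := by
    rw [← himage, Set.ncard_image_of_injective _ (add_right_injective b), countBelow]
  rw [hshift, countBelow, countBelow, ← Set.ncard_union_eq hdisj, ← Set.inter_union_distrib_left,
    Set.Iio_union_Ico_eq_Iio (Nat.le_add_right b n)]

variable {S} in
lemma countBelow_add_one_le_of_mem {q n x : ℕ} (hx : x ∈ S) (hqx : q ≤ x)
    (hxn : x < n) : countBelow S q + 1 ≤ countBelow S n :=
  Set.ncard_lt_ncard (Set.ssubset_iff_of_subset
    (Set.inter_subset_inter_right S (Set.Iio_subset_Iio (hqx.trans hxn.le))) |>.mpr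
      ⟨x, ⟨hx, hxn⟩, fun h => h.2.not_ge hqx⟩)

variable {S} in
lemma countBelow_le_add_one_of_last {q n : ℕ}
    (hlast : ∀ r ∈ S, r < n → r ≤ q) : countBelow S n ≤ countBelow S q + 1 := by
  have hsub : S ∩ Set.Iio n ⊆ insert q (S ∩ Set.Iio q) := fun r ⟨hr, hrn⟩ =>
    (hlast r hr hrn).eq_or_lt.imp id fun hrq => ⟨hr, hrq⟩
  exact (Set.ncard_le_ncard hsub).trans (Set.ncard_insert_le q _)

lemma countBelow_div_mem_Icc (n : ℕ) : (countBelow S n : ℝ) / n ∈ Set.Icc 0 1 :=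
  ⟨by positivity, div_le_one_of_le₀ (by exact_mod_cast countBelow_le S n) n.cast_nonneg⟩

lemma isBoundedUnder_le_countBelow_div :
    IsBoundedUnder (· ≤ ·) atTop fun n : ℕ => (countBelow S n : ℝ) / n :=
  isBoundedUnder_of ⟨1, fun n => (countBelow_div_mem_Icc S n).2⟩

lemma isBoundedUnder_ge_countBelow_div :
    IsBoundedUnder (· ≥ ·) atTop fun n : ℕ => (countBelow S n : ℝ) / n :=
  isBoundedUnder_of ⟨0, fun n => (countBelow_div_mem_Icc S n).1⟩

lemma upperDensity_nonneg : 0 ≤ upperDensity S :=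
  le_limsup_of_frequently_le
    (Eventually.of_forall fun n => (countBelow_div_mem_Icc S n).1).frequently
    (isBoundedUnder_le_countBelow_div S)

variable {η : ℝ} (hη : 0 < η)
include hη

lemma exists_countBelow_le_upperDensity_add :
    ∃ C : ℝ, 0 ≤ C ∧ ∀ n, (countBelow S n : ℝ) ≤ (upperDensity S + η) * n + C := by
  have hlt := eventually_lt_of_limsup_lt (lt_add_of_pos_right (upperDensity S) hη)
    (isBoundedUnder_le_countBelow_div S)
  obtain ⟨n₀, hn₀⟩ := eventually_atTop.mp (hlt.and (eventually_gt_atTop 0))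
  refine ⟨n₀, n₀.cast_nonneg, fun n => ?_⟩
  have hnonneg : 0 ≤ (upperDensity S + η) * n :=
    mul_nonneg (add_nonneg (upperDensity_nonneg S) hη.le) n.cast_nonneg
  rcases le_total n₀ n with h | h
  · obtain ⟨hratio, hpos⟩ := hn₀ n h
    rw [div_lt_iff₀ (by exact_mod_cast hpos)] at hratio
    exact hratio.le.trans (le_add_of_nonneg_right n₀.cast_nonneg)
  · have : (countBelow S n : ℝ) ≤ n₀ := by exact_mod_cast (countBelow_le S n).trans h
    linarith

lemma frequently_upperDensity_sub_lt_countBelow :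
    ∃ᶠ n : ℕ in atTop, (upperDensity S - η) * n < countBelow S n := by
  have hlt := frequently_lt_of_lt_limsup
    (isBoundedUnder_ge_countBelow_div S).isCoboundedUnder_le (sub_lt_self (upperDensity S) hη)
  refine (hlt.and_eventually (eventually_gt_atTop 0)).mono fun n ⟨hratio, hpos⟩ => ?_
  rwa [lt_div_iff₀ (by exact_mod_cast hpos)] at hratio

end Counting

section Gaps

lemma le_of_forall_gap_le {α : Type*} [AddCommGroup α] [PartialOrder α] [IsOrderedAddMonoid α]
    {Q : Set ℕ} (hQ : 0 ∈ Q) {f g : ℕ → α} {L : ℕ} (hzero : f 0 ≤ g 0)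
    (hgap : ∀ q ∈ Q, ∀ n ≤ L, q < n → (∀ r ∈ Q, r < n → r ≤ q) → f n - f q ≤ g n - g q) :
    ∀ n ≤ L, f n ≤ g n := by
  intro n
  induction n using Nat.strong_induction_on with
  | _ n ih =>
    intro hn
    rcases n.eq_zero_or_pos with rfl | hpos
    · exact hzero
    obtain ⟨q, ⟨hqQ, hqn⟩, hmax⟩ :=
      Set.exists_max_image (Q ∩ Set.Iio n) id (Set.toFinite _) ⟨0, hQ, hpos⟩
    have hlast := hgap q hqQ n hn hqn fun r hr hrn => hmax r ⟨hr, hrn⟩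
    simpa using add_le_add hlast (ih q hqn (hqn.le.trans hn))

lemma exists_add_mem_of_lt_ncard {S : Set ℕ} {G L : ℕ} (hG : 0 < G) (hS : S ⊆ Set.Iio L)
    (hcard : L / G + 1 < S.ncard) : ∃ b ∈ S, ∃ d, 0 < d ∧ d < G ∧ b + d ∈ S := by
  have hmaps : ∀ p ∈ S, p / G ∈ Set.Iio (L / G + 1) := fun p hp =>
    Nat.lt_succ_of_le (Nat.div_le_div_right (hS hp).le)
  obtain ⟨x, hx, y, hy, hne, hquot⟩ :=
    Set.exists_ne_map_eq_of_ncard_lt_of_maps_to (by simpa using hcard) hmaps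
  wlog hxy : x < y generalizing x y
  · exact this y hy x hx hne.symm hquot.symm (hne.lt_or_gt.resolve_left hxy)
  have hlt : y < x + G := by
    have hy' := Nat.lt_mul_div_succ y hG
    have hx' := Nat.mul_div_le x G
    rw [← hquot, mul_add, mul_one] at hy'
    omega
  exact ⟨x, hx, y - x, by omega, by omega, by rwa [Nat.add_sub_cancel' hxy.le]⟩

lemma ncard_sub_le {α : Type*} [Sub α] {S T : Set α} (hS : S.Finite) (hT : T.Finite) :
    (S - T).ncard ≤ S.ncard * T.ncard := by
  rw [← Set.sub_image_prod, ← Set.ncard_prod]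
  exact Set.ncard_image_le (hS.prod hT)

end Gaps

section Entries

/-- The places below `m` at which the shift by `d` enters `S`. There are none exactly when `S`
is closed, within `[0, m)`, under subtraction of `d`, so their number measures how far `S` is from
being periodic. -/
def entries (S : Set ℕ) (d m : ℕ) : Set ℕ := {y | y + d < m ∧ y ∉ S ∧ y + d ∈ S}

variable {S : Set ℕ} {d m : ℕ}

lemma finite_entries : (entries S d m).Finite :=
  (Set.finite_Iio m).subset fun _ hy => (Nat.le_add_right _ _).trans_lt hy.1

lemma exists_add_mul_mem_entries {y : ℕ} (hy : y ∉ S) :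
    ∀ {k : ℕ}, y + k * d ∈ S → y + k * d < m → ∃ i < k, y + i * d ∈ entries S d m
  | 0, hmem, _ => absurd (by simpa using hmem) hy
  | k + 1, hmem, hlt => by
    rw [Nat.succ_mul, ← add_assoc] at hmem hlt
    by_cases hk : y + k * d ∈ S
    · obtain ⟨i, hi, hentry⟩ := exists_add_mul_mem_entries hy hk (by omega)
      exact ⟨i, hi.trans k.lt_succ_self, hentry⟩
    · exact ⟨k, k.lt_succ_self, hlt, hk, hmem⟩

lemma ncard_entries_mul_le (k : ℕ) :
    (entries S (k * d) m).ncard ≤ k * (entries S d m).ncard := by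
  induction k with
  | zero => simp [entries]
  | succ k ih =>
    have hlast : (entries S ((k + 1) * d) m \ entries S (k * d) m).ncard
        ≤ (entries S d m).ncard := by
      refine Set.ncard_le_ncard_of_injOn (· + k * d) ?_ (add_left_injective _).injOn finite_entries
      rintro y ⟨⟨hlt, hy, hmem⟩, hentry⟩
      rw [Nat.succ_mul, ← add_assoc] at hlt hmem
      exact ⟨hlt, fun h => hentry ⟨(Nat.le_add_right _ _).trans_lt hlt, hy, h⟩, hmem⟩
    calc (entries S ((k + 1) * d) m).ncard
        ≤ (entries S ((k + 1) * d) m \ entries S (k * d) m).ncard + (entries S (k * d) m).ncard :=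
          Set.ncard_le_ncard_sdiff_add_ncard _ _ finite_entries
      _ ≤ (entries S d m).ncard + k * (entries S d m).ncard := add_le_add hlast ih
      _ = (k + 1) * (entries S d m).ncard := by ring

end Entries

section Holes

/-- The shifts `p < m` that map `A` into itself as far as `[0, m)` can see. -/
def translators (A : Set ℕ) (m : ℕ) : Set ℕ := {p | p < m ∧ ∀ a ∈ A, p + a < m → p + a ∈ A}

/-- The numbers missing from `A` although some number in the same residue class modulo `N` belongs
to `A`. They are finite in number exactly when `A` contains almost all of every class it meets. -/
def holes (A : Set ℕ) (N : ℕ) : Set ℕ := {w | w ∉ A ∧ (w : ZMod N) ∈ Nat.cast '' A}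

variable {A : Set ℕ} {N K m p : ℕ}

lemma finite_translators : (translators A m).Finite :=
  (Set.finite_Iio m).subset fun _ hp => hp.1

variable (A m) in
lemma ncard_translators_le (r : ℕ) :
    (translators A m).ncard ≤ countBelow (translators A m) (m - r) + r := by
  have hfull : countBelow (translators A m) m = (translators A m).ncard :=
    congrArg Set.ncard (Set.inter_eq_left.mpr fun p hp => hp.1)
  calc (translators A m).ncard = countBelow (translators A m) m := hfull.symm
    _ ≤ countBelow (translators A m) (m - r + r) := countBelow_mono _ (by omega)
    _ = countBelow (translators A m) (m - r) + _ := countBelow_add _ _ _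
    _ ≤ countBelow (translators A m) (m - r) + r := Nat.add_le_add_left (countBelow_le _ r) _

variable [NeZero N]

variable (A N) in
lemma exists_image_natCast_subset :
    ∃ K, (Nat.cast '' A : Set (ZMod N)) ⊆ Nat.cast '' (A ∩ Set.Iio K) := by
  obtain ⟨R, hRA, hR⟩ := (Set.surjOn_image (Nat.cast : ℕ → ZMod N) A).exists_bijOn_subset
  obtain ⟨K, hK⟩ := (Set.Finite.of_finite_image (Set.toFinite _) hR.injOn).bddAbove
  exact ⟨K + 1, hR.image_eq ▸ Set.image_mono fun a ha => ⟨hRA ha, Nat.lt_succ_of_le (hK ha)⟩⟩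

section Stabilizer

variable (hK : (Nat.cast '' A : Set (ZMod N)) ⊆ Nat.cast '' (A ∩ Set.Iio K))
  (hp : p ∈ translators A m) (hpK : p + K ≤ m)
include hK hp hpK

lemma natCast_mem_stabilizer :
    (p : ZMod N) ∈ AddAction.stabilizer (ZMod N) (Nat.cast '' A : Set (ZMod N)) := by
  refine (AddAction.mem_stabilizer_set' (Set.toFinite _)).mpr fun r hr => ?_
  obtain ⟨a, ⟨ha, haK⟩, rfl⟩ := hK hr
  exact ⟨p + a, hp.2 a ha ((Nat.add_lt_add_left haK p).trans_le hpK), Nat.cast_add p a⟩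

lemma mem_holes_of_add_mem_holes {w : ℕ} (hw : p + w ∈ holes A N) (hwm : p + w < m) :
    w ∈ holes A N := by
  refine ⟨fun hwA => hw.1 (hp.2 w hwA hwm), ?_⟩
  exact (AddAction.mem_stabilizer_set.mp (natCast_mem_stabilizer hK hp hpK) w).mp
    (by simpa using hw.2)

lemma countBelow_holes_add_le {n : ℕ} (hn : p + n ≤ m) :
    countBelow (holes A N) (p + n) ≤ countBelow (holes A N) p + countBelow (holes A N) n := by
  rw [countBelow_add]
  refine Nat.add_le_add_left (Set.ncard_le_ncard ?_ (Set.toFinite _)) _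
  rintro w ⟨hw, hwn⟩
  refine ⟨?_, hwn⟩
  exact mem_holes_of_add_mem_holes hK hp hpK hw ((Nat.add_lt_add_left hwn p).trans_le hn)

lemma exists_mem_entries_holes {w : ℕ} (hw : w ∈ holes A N) (hpw : p + K ≤ w) (hwm : w < m) :
    ∃ y ∈ entries (holes A N) N m, p ≤ y ∧ y < w := by
  obtain ⟨v, rfl⟩ := Nat.exists_eq_add_of_le ((Nat.le_add_right p K).trans hpw)
  obtain ⟨a, ⟨ha, haK : a < K⟩, hav⟩ := hK (mem_holes_of_add_mem_holes hK hp hpK hw hwm).2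
  have hstart : p + a ∉ holes A N := fun h => h.1 (hp.2 a ha (by omega))
  obtain ⟨k, hk⟩ : N ∣ v - a :=
    (Nat.modEq_iff_dvd' (by omega)).mp ((ZMod.natCast_eq_natCast_iff a v N).mp hav)
  have hend : p + v = p + a + k * N := by rw [mul_comm, ← hk]; omega
  rw [hend] at hw hwm ⊢
  obtain ⟨i, hi, hentry⟩ := exists_add_mul_mem_entries hstart hw hwm
  have := Nat.mul_lt_mul_of_pos_right hi (NeZero.pos N)
  exact ⟨_, hentry, by omega, by omega⟩

end Stabilizer

lemma countBelow_holes_add_ncard_entries_le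
    (hK : (Nat.cast '' A : Set (ZMod N)) ⊆ Nat.cast '' (A ∩ Set.Iio K)) {b d n : ℕ}
    (hb : b ∈ translators A (b + n)) (hbd : b + d ∈ translators A (b + n)) (hn : d + K ≤ n) :
    countBelow (holes A N) (b + n) + (entries (holes A N) d n).ncard ≤
      countBelow (holes A N) b + countBelow (holes A N) n := by
  set H := holes A N
  have hdisj : Disjoint ({x | b + x ∈ H} ∩ Set.Iio n) ((· + d) '' entries H d n) := by
    refine Set.disjoint_left.mpr ?_
    rintro _ ⟨hbx, -⟩ ⟨y, ⟨hyn, hy, -⟩, rfl⟩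
    have hbdy : b + d + y = b + (y + d) := by ring
    exact hy (mem_holes_of_add_mem_holes hK hbd (by omega) (hbdy ▸ hbx) (by omega))
  rw [countBelow_add, add_assoc, ← Set.ncard_image_of_injective _ (add_left_injective d),
    countBelow.eq_def _ n, ← Set.ncard_union_eq hdisj (Set.toFinite _) (finite_entries.image _)]
  refine Nat.add_le_add_left (Set.ncard_le_ncard (Set.union_subset ?_ ?_)) _
  · rintro x ⟨hbx, hxn : x < n⟩
    exact ⟨mem_holes_of_add_mem_holes hK hb (by omega) hbx (by omega), hxn⟩
  · rintro _ ⟨y, ⟨hyn, -, hyd⟩, rfl⟩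
    exact ⟨hyd, hyn⟩

end Holes

section Density

lemma eventually_exists_add_mem_translators {A : Set ℕ} {δ : ℝ} {G : ℕ} (hδ : 0 < δ)
    (hT : ∀ᶠ m : ℕ in atTop, δ * m ≤ (translators A m).ncard) (hG : 4 ≤ δ * G) :
    ∀ᶠ m : ℕ in atTop, ∃ b x d, b + x = m ∧ δ / 4 * m ≤ x ∧ 0 < d ∧ d < G ∧
      b ∈ translators A m ∧ b + d ∈ translators A m := by
  have hG₀ : 0 < G := Nat.pos_of_ne_zero fun h => by norm_num [h] at hG
  filter_upwards [hT, (tendsto_natCast_atTop_atTop (R := ℝ)).eventually_gt_atTop (4 / δ)]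
    with m hTm hm
  rw [div_lt_iff₀' hδ] at hm
  set r := ⌈δ / 4 * m⌉₊
  have hr : δ / 4 * m ≤ r := Nat.le_ceil _
  have hr' : (r : ℝ) < δ / 4 * m + 1 := Nat.ceil_lt_add_one (by positivity)
  have hquot : (((m - r) / G : ℕ) : ℝ) ≤ δ / 4 * m := by
    have hfloor : (((m - r) / G : ℕ) * G : ℝ) ≤ m := by
      exact_mod_cast (Nat.div_mul_le_self _ _).trans (Nat.sub_le m r)
    have := mul_le_mul_of_nonneg_left hfloor hδ.le
    have := mul_le_mul_of_nonneg_left hG ((m - r) / G : ℕ).cast_nonneg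
    linarith
  have hcard : (m - r) / G + 1 < countBelow (translators A m) (m - r) := by
    have hlast : ((translators A m).ncard : ℝ) ≤ countBelow (translators A m) (m - r) + r := by
      exact_mod_cast ncard_translators_le A m r
    have : (((m - r) / G : ℕ) + 1 : ℝ) < countBelow (translators A m) (m - r) := by linarith
    exact_mod_cast this
  obtain ⟨b, ⟨hb, hbr : b < m - r⟩, d, hd, hdG, hbd, -⟩ :=
    exists_add_mem_of_lt_ncard hG₀ Set.inter_subset_right hcard
  refine ⟨b, m - b, d, Nat.add_sub_cancel' hb.1.le, hr.trans ?_, hd, hdG, hb, hbd⟩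
  exact_mod_cast (by omega : r ≤ m - b)

variable {A : Set ℕ} {N K m : ℕ} [NeZero N] {t C δ : ℝ}

lemma countBelow_holes_sub_le
    (hK : (Nat.cast '' A : Set (ZMod N)) ⊆ Nat.cast '' (A ∩ Set.Iio K)) (ht : 0 ≤ t) (hC : 0 ≤ C)
    (hω : ∀ n, (countBelow (holes A N) n : ℝ) ≤ t * n + C) {q n : ℕ} (hq : q ∈ translators A m)
    (hqn : q < n) (hn : n + K ≤ m) :
    (countBelow (holes A N) (n + K) : ℝ) - countBelow (holes A N) (q + K) ≤
      t * (n - q - 1) + (t * (K + 1) + C) *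
        (countBelow (entries (holes A N) N m - Set.Iic K) n -
          countBelow (entries (holes A N) N m - Set.Iic K) q) := by
  set H := holes A N
  set E := entries H N m - Set.Iic K
  have hqn' : (q : ℝ) + 1 ≤ n := by exact_mod_cast hqn
  by_cases hentry : ∃ y ∈ entries H N m, q ≤ y ∧ y < n + K
  · obtain ⟨y, hy, hqy, hyn⟩ := hentry
    have hE : (countBelow E q : ℝ) + 1 ≤ countBelow E n := by
      have hmem : y - (y - (n - 1)) ∈ E := Set.sub_mem_sub hy (Set.mem_Iic.mpr (by omega))
      exact_mod_cast countBelow_add_one_le_of_mem hmem (by omega) (by omega)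
    have hsub := countBelow_holes_add_le hK hq (by omega) (n := n + K - q) (by omega)
    rw [Nat.add_sub_cancel' (by omega)] at hsub
    have hsub' : (countBelow H (n + K) : ℝ) ≤
        countBelow H (q + K) + countBelow H (n + K - q) := by
      exact_mod_cast hsub.trans
        (Nat.add_le_add_right (countBelow_mono H (Nat.le_add_right q K)) _)
    have hlen := hω (n + K - q)
    rw [Nat.cast_sub (by omega), Nat.cast_add] at hlen
    have hΛ := mul_le_mul_of_nonneg_left (le_sub_iff_add_le'.mpr hE)
      (by positivity : 0 ≤ t * (K + 1) + C)
    linarith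
  · have hE : (countBelow E q : ℝ) ≤ countBelow E n := by
      exact_mod_cast countBelow_mono E hqn.le
    have hempty : countBelow H (n + K) ≤ countBelow H (q + K) := by
      refine Set.ncard_le_ncard fun w ⟨hw, hwn⟩ => ⟨hw, ?_⟩
      by_contra hqw
      obtain ⟨y, hy, hqy, hyw⟩ :=
        exists_mem_entries_holes hK hq (by omega) hw (not_lt.mp hqw) (hwn.trans_le hn)
      exact hentry ⟨y, hy, hqy, hyw.trans hwn⟩
    have hempty' : (countBelow H (n + K) : ℝ) ≤ countBelow H (q + K) := by exact_mod_cast hempty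
    have := mul_nonneg ht (by linarith : (0 : ℝ) ≤ n - q - 1)
    have := mul_nonneg (by positivity : 0 ≤ t * (K + 1) + C) (sub_nonneg.mpr hE)
    linarith

lemma countBelow_holes_le
    (hK : (Nat.cast '' A : Set (ZMod N)) ⊆ Nat.cast '' (A ∩ Set.Iio K)) (ht : 0 ≤ t) (hC : 0 ≤ C)
    (hω : ∀ n, (countBelow (holes A N) n : ℝ) ≤ t * n + C) (hm : K < m) :
    (countBelow (holes A N) m : ℝ) ≤ K + t * (m - (translators A m).ncard) +
      (t * (K + 1) + C) * ((entries (holes A N) N m).ncard * (K + 1)) := by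
  set H := holes A N
  set Q := translators A m
  set E := entries H N m - Set.Iic K
  set Λ := t * (K + 1) + C
  have hQ : 0 ∈ Q := ⟨by omega, fun a ha _ => by rwa [zero_add]⟩
  have hgap := le_of_forall_gap_le hQ (f := fun n => (countBelow H (n + K) : ℝ))
    (g := fun n => K + t * (n - countBelow Q n) + Λ * countBelow E n) (L := m - K) (by
      have : (countBelow H (0 + K) : ℝ) ≤ K := by
        exact_mod_cast (countBelow_le H _).trans_eq (zero_add K)
      simpa [countBelow] using this)
    (fun q hq n hn hqn hlast => by
      have hgap := countBelow_holes_sub_le hK ht hC hω hq hqn (by omega)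
      have hone : (countBelow Q n : ℝ) ≤ countBelow Q q + 1 := by
        exact_mod_cast countBelow_le_add_one_of_last hlast
      have := mul_le_mul_of_nonneg_left hone ht
      linarith) (m - K) le_rfl
  simp only [Nat.sub_add_cancel hm.le] at hgap
  have hQm : (Q.ncard : ℝ) ≤ countBelow Q (m - K) + K := by
    exact_mod_cast ncard_translators_le A m K
  have hEm : (countBelow E (m - K) : ℝ) ≤ (entries H N m).ncard * (K + 1) := by
    have hE := ncard_sub_le (finite_entries (S := H) (d := N) (m := m)) (Set.finite_Iic K)
    rw [Set.ncard_Iic_nat] at hE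
    exact_mod_cast (Set.ncard_le_ncard Set.inter_subset_left
      (finite_entries.sub (Set.finite_Iic K))).trans hE
  rw [Nat.cast_sub hm.le] at hgap
  have := mul_le_mul_of_nonneg_left hQm ht
  have := mul_le_mul_of_nonneg_left hEm (by positivity : 0 ≤ Λ)
  linarith

variable (hδ : 0 < δ) (hT : ∀ᶠ m : ℕ in atTop, δ * m ≤ (translators A m).ncard)
include hδ hT

lemma exists_countBelow_holes_le_one_sub_sq_mul (hθ : 0 < upperDensity (holes A N)) :
    ∃ C : ℝ, 0 ≤ C ∧ ∀ᶠ m : ℕ in atTop, (countBelow (holes A N) m : ℝ) ≤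
      upperDensity (holes A N) * (1 - δ ^ 2) * m + C * (1 + (entries (holes A N) N m).ncard) := by
  set θ := upperDensity (holes A N)
  obtain ⟨K, hK⟩ := exists_image_natCast_subset A N
  obtain ⟨C, hC, hω⟩ := exists_countBelow_le_upperDensity_add (holes A N) (mul_pos hθ hδ)
  have ht : 0 ≤ θ + θ * δ := by positivity
  have : 0 ≤ ((θ + θ * δ) * (K + 1) + C) * (K + 1) := by positivity
  refine ⟨K + ((θ + θ * δ) * (K + 1) + C) * (K + 1), by positivity, ?_⟩
  filter_upwards [hT, eventually_gt_atTop K] with m hTm hm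
  have hbound := countBelow_holes_le hK ht hC hω hm
  have := mul_le_mul_of_nonneg_left hTm ht
  have : 0 ≤ (K : ℝ) * (entries (holes A N) N m).ncard := by positivity
  linarith

lemma eventually_exists_mul_countBelow_holes_le {G : ℕ} (hG : 4 ≤ δ * G)
    (hN : ∀ d, 0 < d → d < G → d ∣ N) :
    ∀ᶠ m : ℕ in atTop, ∃ b x, b + x = m ∧ δ / 4 * m ≤ x ∧
      N * countBelow (holes A N) m + (entries (holes A N) N x).ncard ≤
        N * (countBelow (holes A N) b + countBelow (holes A N) x) := by
  obtain ⟨K, hK⟩ := exists_image_natCast_subset A N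
  filter_upwards [eventually_exists_add_mem_translators hδ hT hG,
    (tendsto_natCast_atTop_atTop (R := ℝ)).eventually_ge_atTop ((G + K) / (δ / 4))] with m hsplit hm
  obtain ⟨b, x, d, rfl, hx, hd, hdG, hb, hbd⟩ := hsplit
  refine ⟨b, x, rfl, hx, ?_⟩
  rw [div_le_iff₀' (by positivity)] at hm
  have hdK : G + K ≤ x := by exact_mod_cast hm.trans hx
  obtain ⟨k, rfl⟩ := hN d hd hdG
  have hrefine : (entries (holes A (d * k)) (d * k) x).ncard ≤
      d * k * (entries (holes A (d * k)) d x).ncard := by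
    rw [mul_comm d k]
    exact (ncard_entries_mul_le k).trans
      (Nat.mul_le_mul_right _ (Nat.le_mul_of_pos_right k hd))
  calc d * k * countBelow (holes A (d * k)) (b + x) + (entries (holes A (d * k)) (d * k) x).ncard
      ≤ d * k * (countBelow (holes A (d * k)) (b + x) +
          (entries (holes A (d * k)) d x).ncard) := by rw [mul_add]; gcongr
    _ ≤ d * k * (countBelow (holes A (d * k)) b + countBelow (holes A (d * k)) x) :=
        Nat.mul_le_mul_left _ (countBelow_holes_add_ncard_entries_le hK hb hbd (by omega))

lemma upperDensity_holes_eq_zero {G : ℕ} (hG : 4 ≤ δ * G) (hN : ∀ d, 0 < d → d < G → d ∣ N) :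
    upperDensity (holes A N) = 0 := by
  by_contra hne
  have hθ := (upperDensity_nonneg _).lt_of_ne' hne
  obtain ⟨C₁, hC₁, hupper⟩ := exists_countBelow_holes_le_one_sub_sq_mul hδ hT hθ
  set H := holes A N
  set θ := upperDensity H
  -- With this `η` an extremal splitting `m = b + x` loses at most half of the gain
  -- `θ * δ ^ 2 * x ≥ θ * δ ^ 3 / 4 * m`.
  obtain ⟨η, hη, hηeq⟩ : ∃ η : ℝ, 0 < η ∧ 2 * (1 + C₁ * N) * η = θ * δ ^ 3 / 8 :=
    ⟨θ * δ ^ 3 / 8 / (2 * (1 + C₁ * N)), by positivity, by field_simp⟩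
  obtain ⟨C₂, -, hlinear⟩ := exists_countBelow_le_upperDensity_add H hη
  obtain ⟨X, hX⟩ := eventually_atTop.mp hupper
  have hX' := (tendsto_natCast_atTop_atTop (R := ℝ)).eventually_ge_atTop (X / (δ / 4))
  have hlarge := (tendsto_natCast_atTop_atTop (R := ℝ)).eventually_gt_atTop
    ((C₁ + C₂ + 2 * C₁ * N * C₂) / (θ * δ ^ 3 / 8))
  obtain ⟨m, hextremal, ⟨b, x, rfl, hx, hsplit⟩, hm, hm'⟩ :=
    ((frequently_upperDensity_sub_lt_countBelow H hη).and_eventually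
      ((eventually_exists_mul_countBelow_holes_le hδ hT hG hN).and (hX'.and hlarge))).exists
  rw [div_le_iff₀' (by positivity)] at hm
  rw [div_lt_iff₀' (by positivity)] at hm'
  have hHx := hX x (by exact_mod_cast hm.trans hx)
  set D := (entries H N x).ncard
  push_cast at hextremal hx hm'
  have hentries : (D : ℝ) ≤ N * (2 * η * (b + x) + 2 * C₂) := by
    have hD : (D : ℝ) ≤ N * (countBelow H b + countBelow H x - countBelow H (b + x)) := by
      rw [mul_sub, le_sub_iff_add_le']
      exact_mod_cast hsplit
    refine hD.trans (mul_le_mul_of_nonneg_left ?_ N.cast_nonneg)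
    linarith [hlinear b, hlinear x]
  have hlower : θ * x - 2 * η * (b + x) - C₂ ≤ countBelow H x := by
    have hsubadd : (countBelow H (b + x) : ℝ) ≤ countBelow H b + countBelow H x := by
      exact_mod_cast Nat.le_of_mul_le_mul_left (le_of_add_le_left hsplit) (NeZero.pos N)
    linarith [hlinear b, mul_nonneg hη.le (x.cast_nonneg (α := ℝ))]
  have hdrop : θ * δ ^ 2 * x ≤ θ * δ ^ 3 / 8 * (b + x) + (C₁ + C₂ + 2 * C₁ * N * C₂) := by
    have := mul_le_mul_of_nonneg_left hentries hC₁
    rw [← hηeq]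
    linarith
  have := mul_le_mul_of_nonneg_left hx (by positivity : 0 ≤ θ * δ ^ 2)
  linarith

lemma eventually_mem_of_natCast_mem {G : ℕ} (hG : 4 ≤ δ * G)
    (hN : ∀ d, 0 < d → d < G → d ∣ N) :
    ∀ᶠ n : ℕ in atTop, (n : ZMod N) ∈ (Nat.cast '' A : Set (ZMod N)) → n ∈ A := by
  obtain ⟨K, hK⟩ := exists_image_natCast_subset A N
  obtain ⟨C, -, hsparse⟩ := exists_countBelow_le_upperDensity_add (holes A N) (half_pos hδ)
  rw [upperDensity_holes_eq_zero hδ hT hG hN, zero_add] at hsparse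
  filter_upwards [(tendsto_add_atTop_nat 1).eventually hT,
    (tendsto_natCast_atTop_atTop (R := ℝ)).eventually_gt_atTop ((C + K) / (δ / 2))]
    with n hTn hn hmod
  by_contra hnA
  have hreflect : (translators A (n + 1)).ncard ≤ countBelow (holes A N) (n + 1) + K := by
    refine (ncard_translators_le A (n + 1) K).trans (Nat.add_le_add_right ?_ K)
    refine Set.ncard_le_ncard_of_injOn (n - ·) ?_ ?_ (Set.toFinite _)
    · rintro p ⟨hp, hpn : p < n + 1 - K⟩
      have hpn' : p + (n - p) = n := Nat.add_sub_cancel' (by omega)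
      exact ⟨mem_holes_of_add_mem_holes (m := n + 1) hK hp (by omega)
        (by rw [hpn']; exact ⟨hnA, hmod⟩) (by omega), Nat.lt_succ_of_le (Nat.sub_le n p)⟩
    · rintro p ⟨-, hpn : p < n + 1 - K⟩ q ⟨-, hqn : q < n + 1 - K⟩ (hpq : n - p = n - q)
      omega
  have hreflect' : ((translators A (n + 1)).ncard : ℝ) ≤ countBelow (holes A N) (n + 1) + K := by
    exact_mod_cast hreflect
  have hsmall := hsparse (n + 1)
  rw [div_lt_iff₀' (by positivity)] at hn
  push_cast at hTn hsmall
  linarith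

end Density

section DysonTransform

variable {M : Type*} [AddCommSemigroup M]

/-- The set that grows under the Dyson transform of the pair `(A, B)` based at `e`. The transform
does nothing unless `e ∈ A`. -/
def dysonLeft (e : M) (A B : Set M) : Set M := A ∪ {x | e ∈ A ∧ ∃ b ∈ B, e + b = x}

/-- The set that shrinks under the Dyson transform of the pair `(A, B)` based at `e`. -/
def dysonRight (e : M) (A B : Set M) : Set M := {b ∈ B | e ∈ A → e + b ∈ A}

lemma dysonLeft_add_dysonRight_subset (e : M) (A B : Set M) :
    dysonLeft e A B + dysonRight e A B ⊆ A + B := by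
  rintro _ ⟨x, hx | ⟨he, b, hb, rfl⟩, y, ⟨hy, hey⟩, rfl⟩
  · exact Set.add_mem_add hx hy
  · exact ⟨e + y, hey he, b, hb, add_right_comm e y b⟩

end DysonTransform

section DysonState

variable {k : ℕ} [NeZero k]

/-- The result of `t` successive Dyson transforms of `A` with `B 0, …, B (k - 1)` in turn. The
transforms numbered `e * k, …, e * k + k - 1` are based at `e`, so that every base meets every
`B j`. -/
def dysonState (A : Set ℕ) (B : Fin k → Set ℕ) : ℕ → Set ℕ × (Fin k → Set ℕ)
  | 0 => (A, B)
  | t + 1 =>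
    let S := (dysonState A B t).1
    let T := (dysonState A B t).2
    let j := Fin.ofNat k t
    (dysonLeft (t / k) S (T j), Function.update T j (dysonRight (t / k) S (T j)))

/-- The `b < m` in `B j` that the first `t` Dyson transforms do not discard, where a transform based
at `e` counts only if `e + b < m`. For fixed `b` these are the transforms numbered below
`(m - b) * k`. -/
def survivors (A : Set ℕ) (B : Fin k → Set ℕ) (m t : ℕ) (j : Fin k) : Set ℕ :=
  {b | b < m ∧ b ∈ (dysonState A B (min t ((m - b) * k))).2 j}

variable {A : Set ℕ} {B : Fin k → Set ℕ}

lemma monotone_dysonState_fst : Monotone fun t => (dysonState A B t).1 :=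
  monotone_nat_of_le_succ fun _ => Set.subset_union_left

lemma dysonState_succ_snd_self (t : ℕ) : (dysonState A B (t + 1)).2 (Fin.ofNat k t) =
    dysonRight (t / k) (dysonState A B t).1 ((dysonState A B t).2 (Fin.ofNat k t)) :=
  Function.update_self ..

lemma dysonState_succ_snd_of_ne {t : ℕ} {j : Fin k} (hj : j ≠ Fin.ofNat k t) :
    (dysonState A B (t + 1)).2 j = (dysonState A B t).2 j :=
  Function.update_of_ne hj ..

lemma antitone_dysonState_snd (j : Fin k) : Antitone fun t => (dysonState A B t).2 j := by
  refine antitone_nat_of_succ_le fun t => ?_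
  by_cases hj : j = Fin.ofNat k t
  · subst hj
    exact (dysonState_succ_snd_self t).trans_subset (Set.sep_subset _ _)
  · exact (dysonState_succ_snd_of_ne hj).subset

lemma zero_mem_dysonState_snd (hB : ∀ j, 0 ∈ B j) (t : ℕ) (j : Fin k) :
    0 ∈ (dysonState A B t).2 j := by
  induction t with
  | zero => exact hB j
  | succ t ih =>
    by_cases hj : j = Fin.ofNat k t
    · subst hj
      rw [dysonState_succ_snd_self]
      exact ⟨ih, id⟩
    · rwa [dysonState_succ_snd_of_ne hj]

lemma dysonState_add_sum_subset (t : ℕ) :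
    (dysonState A B t).1 + ∑ j, (dysonState A B t).2 j ⊆ A + ∑ j, B j := by
  induction t with
  | zero => exact subset_rfl
  | succ t ih =>
    refine subset_trans ?_ ih
    have hj := Finset.mem_univ (Fin.ofNat k t)
    rw [dysonState, Finset.sum_update_of_mem hj, ← Finset.add_sum_erase _ _ hj, ← add_assoc,
      ← add_assoc, Finset.sdiff_singleton_eq_erase]
    exact Set.add_subset_add_right (dysonLeft_add_dysonRight_subset _ _ _)

lemma mem_dysonState_mul {t a : ℕ} (ha : a ∈ (dysonState A B t).1) :
    a ∈ (dysonState A B (a * k)).1 := by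
  induction t with
  | zero => exact monotone_dysonState_fst (Nat.zero_le _) ha
  | succ t ih =>
    obtain ha | ⟨he, b, hb, rfl⟩ := ha
    · exact ih ha
    rcases b.eq_zero_or_pos with rfl | hpos
    · exact ih he
    · have hstep : t + 1 ≤ (t / k + b) * k :=
        (Nat.div_lt_iff_lt_mul (NeZero.pos k)).mp (Nat.lt_add_of_pos_right hpos)
      exact monotone_dysonState_fst hstep (Or.inr ⟨he, b, hb, rfl⟩)

lemma finite_survivors {m t : ℕ} {j : Fin k} : (survivors A B m t j).Finite :=
  (Set.finite_Iio m).subset fun _ hb => hb.1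

lemma mem_dysonState_of_mem_survivors_sdiff {m t b : ℕ} {j : Fin k}
    (hb : b ∈ survivors A B m t j \ survivors A B m (t + 1) j) :
    t / k + b < m ∧ b ∈ (dysonState A B t).2 j ∧ b ∉ (dysonState A B (t + 1)).2 j := by
  obtain ⟨⟨hbm, hbt⟩, hbt'⟩ := hb
  have ht : t < (m - b) * k := by
    by_contra h
    rw [not_lt] at h
    rw [min_eq_right h] at hbt
    exact hbt' ⟨hbm, by rwa [min_eq_right (h.trans t.le_succ)]⟩
  have := (Nat.div_lt_iff_lt_mul (NeZero.pos k)).mpr ht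
  refine ⟨by omega, by rwa [min_eq_left ht.le] at hbt, fun h => hbt' ⟨hbm, ?_⟩⟩
  rwa [min_eq_left (Nat.succ_le_of_lt ht)]

lemma countBelow_add_ncard_survivors_le (m t : ℕ) :
    countBelow (dysonState A B t).1 m + (survivors A B m t (Fin.ofNat k t)).ncard ≤
      countBelow (dysonState A B (t + 1)).1 m +
        (survivors A B m (t + 1) (Fin.ofNat k t)).ncard := by
  set R := survivors A B m t (Fin.ofNat k t)
  set R' := survivors A B m (t + 1) (Fin.ofNat k t)
  set S := (dysonState A B t).1 ∩ Set.Iio m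
  set S' := (dysonState A B (t + 1)).1 ∩ Set.Iio m
  have hmoved : (R \ R').ncard ≤ (S' \ S).ncard := by
    refine Set.ncard_le_ncard_of_injOn (t / k + ·) ?_ (add_right_injective _).injOn
      (Set.toFinite _)
    intro b hb
    obtain ⟨hbm, hbB, hb'⟩ := mem_dysonState_of_mem_survivors_sdiff hb
    rw [dysonState_succ_snd_self] at hb'
    obtain ⟨he, heb⟩ : t / k ∈ (dysonState A B t).1 ∧ t / k + b ∉ (dysonState A B t).1 := by
      by_contra! h
      exact hb' ⟨hbB, h⟩
    exact ⟨⟨Or.inr ⟨he, b, hbB, rfl⟩, hbm⟩, fun h => heb h.1⟩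
  have hgrow : (S' \ S).ncard + S.ncard = S'.ncard :=
    Set.ncard_sdiff_add_ncard_of_subset
      (Set.inter_subset_inter_left _ (monotone_dysonState_fst t.le_succ))
  have hshrink : R.ncard ≤ (R \ R').ncard + R'.ncard :=
    Set.ncard_le_ncard_sdiff_add_ncard R R' finite_survivors
  change S.ncard + R.ncard ≤ S'.ncard + R'.ncard
  omega

lemma countBelow_add_sum_le (m t : ℕ) :
    countBelow A m + ∑ j, countBelow (B j) m ≤
      countBelow (dysonState A B t).1 m + ∑ j, (survivors A B m t j).ncard := by
  induction t with
  | zero =>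
    refine Nat.add_le_add_left (Finset.sum_le_sum fun j _ => ?_) _
    refine Set.ncard_le_ncard (fun b ⟨hb, hbm⟩ => ⟨hbm, ?_⟩) finite_survivors
    rwa [Nat.zero_min]
  | succ t ih =>
    have hothers : ∀ j ≠ Fin.ofNat k t,
        (survivors A B m t j).ncard ≤ (survivors A B m (t + 1) j).ncard := fun j hj => by
      refine Set.ncard_le_ncard (Set.sdiff_eq_empty.mp ?_) finite_survivors
      refine Set.eq_empty_of_forall_notMem fun b hb => ?_
      obtain ⟨-, hbB, hb'⟩ := mem_dysonState_of_mem_survivors_sdiff hb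
      exact hb' (by rwa [dysonState_succ_snd_of_ne hj])
    refine ih.trans ?_
    rw [← Finset.add_sum_erase _ _ (Finset.mem_univ (Fin.ofNat k t)),
      ← Finset.add_sum_erase _ _ (Finset.mem_univ (Fin.ofNat k t)), ← add_assoc, ← add_assoc]
    exact add_le_add (countBelow_add_ncard_survivors_le m t)
      (Finset.sum_le_sum fun j hj => hothers j (Finset.ne_of_mem_erase hj))

lemma survivors_subset_translators (m : ℕ) (j : Fin k) :
    survivors A B m (m * k) j ⊆ translators (⋃ t, (dysonState A B t).1) m := by
  rintro b ⟨hbm, hb⟩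
  rw [min_eq_right (Nat.mul_le_mul_right k (Nat.sub_le m b))] at hb
  refine ⟨hbm, fun a ha hbam => ?_⟩
  obtain ⟨t, ht⟩ := Set.mem_iUnion.mp ha
  have hbase : (a * k + j) / k = a := by
    rw [mul_comm, Nat.mul_add_div (NeZero.pos k), Nat.div_eq_of_lt j.isLt, add_zero]
  have hindex : Fin.ofNat k (a * k + j) = j := by
    ext
    simp [Nat.mod_eq_of_lt j.isLt]
  have hstep : a * k + j + 1 ≤ (m - b) * k := by
    have := Nat.mul_le_mul_right k (by omega : a + 1 ≤ m - b)
    rw [Nat.succ_mul] at this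
    omega
  have hkept : b ∈ (dysonState A B (a * k + j + 1)).2 (Fin.ofNat k (a * k + j)) :=
    hindex.symm ▸ antitone_dysonState_snd j hstep hb
  rw [dysonState_succ_snd_self, hbase] at hkept
  have hab := hkept.2 (monotone_dysonState_fst (Nat.le_add_right _ _) (mem_dysonState_mul ht))
  exact Set.mem_iUnion.mpr ⟨_, add_comm a b ▸ hab⟩

end DysonState

section Sumsets

variable {k : ℕ} [NeZero k] {G : ℕ} {ε : ℝ} {A : Fin (k + 1) → Set ℕ}

lemma eventually_mem_sum_of_dvd (hzero : ∀ i, 0 ∈ A i) (hε : 0 < ε) (hG : 4 * k ≤ ε * G)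
    (hA : ∀ᶠ m : ℕ in atTop, (1 + ε) * m ≤ ∑ i, (countBelow (A i) m : ℝ)) :
    ∀ᶠ n in atTop, G.factorial ∣ n → n ∈ ∑ i, A i := by
  have : NeZero G.factorial := ⟨G.factorial_ne_zero⟩
  have hk : (0 : ℝ) < k := by exact_mod_cast NeZero.pos k
  set U := ⋃ t, (dysonState (A 0) (fun j : Fin k => A j.succ) t).1 with hU
  have htranslators : ∀ᶠ m : ℕ in atTop, ε / k * m ≤ (translators U m).ncard := by
    filter_upwards [hA] with m hm
    have hcount : ∑ i, countBelow (A i) m ≤ m + k * (translators U m).ncard := by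
      rw [Fin.sum_univ_succ]
      refine (countBelow_add_sum_le m (m * k)).trans (add_le_add (countBelow_le _ m) ?_)
      refine (Finset.sum_le_card_nsmul _ _ _ fun j _ =>
        Set.ncard_le_ncard (survivors_subset_translators m j) finite_translators).trans_eq ?_
      simp [hU]
    have hcount' : ∑ i, (countBelow (A i) m : ℝ) ≤ m + k * (translators U m).ncard := by
      exact_mod_cast hcount
    rw [div_mul_eq_mul_div, div_le_iff₀' hk]
    linarith
  filter_upwards [eventually_mem_of_natCast_mem (div_pos hε hk) htranslators
    (by rwa [div_mul_eq_mul_div, le_div_iff₀ hk])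
    fun d hd hdG => Nat.dvd_factorial hd hdG.le] with n hn hdvd
  have hzeroU : 0 ∈ U := Set.mem_iUnion.mpr ⟨0, hzero 0⟩
  obtain ⟨t, ht⟩ := Set.mem_iUnion.mp
    (hn ⟨0, hzeroU, by rw [Nat.cast_zero, (ZMod.natCast_eq_zero_iff n _).mpr hdvd]⟩)
  rw [Fin.sum_univ_succ]
  refine dysonState_add_sum_subset t ⟨n, ht, 0, ?_, add_zero n⟩
  exact (Set.mem_fintype_sum _ _).mpr
    ⟨0, fun j => zero_mem_dysonState_snd (fun j => hzero j.succ) t j, Finset.sum_const_zero⟩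

lemma eventually_mem_sum_of_modEq {b : Fin (k + 1) → ℕ} (hb : ∀ i, b i ∈ A i) (hε : 0 < ε)
    (hG : 4 * k ≤ ε * G)
    (hA : ∀ᶠ m : ℕ in atTop, (1 + 2 * ε) * m ≤ ∑ i, (countBelow (A i) m : ℝ)) :
    ∀ᶠ n in atTop, ∑ i, b i ≡ n [MOD G.factorial] → n ∈ ∑ i, A i := by
  have htranslate : ∀ᶠ m : ℕ in atTop,
      (1 + ε) * m ≤ ∑ i, (countBelow {x | b i + x ∈ A i} m : ℝ) := by
    filter_upwards [hA, (tendsto_natCast_atTop_atTop (R := ℝ)).eventually_ge_atTop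
      ((∑ i, b i : ℕ) / ε)] with m hm hlarge
    have hshift : ∑ i, countBelow (A i) m ≤ ∑ i, b i + ∑ i, countBelow {x | b i + x ∈ A i} m := by
      rw [← Finset.sum_add_distrib]
      refine Finset.sum_le_sum fun i _ => ?_
      calc countBelow (A i) m ≤ countBelow (A i) (b i + m) :=
            countBelow_mono _ (Nat.le_add_left m (b i))
        _ = countBelow (A i) (b i) + countBelow {x | b i + x ∈ A i} m := countBelow_add _ _ _
        _ ≤ b i + countBelow {x | b i + x ∈ A i} m :=
            Nat.add_le_add_right (countBelow_le _ _) _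
    have hshift' : ∑ i, (countBelow (A i) m : ℝ) ≤
        (∑ i, b i : ℕ) + ∑ i, (countBelow {x | b i + x ∈ A i} m : ℝ) := by
      exact_mod_cast hshift
    rw [div_le_iff₀' hε] at hlarge
    linarith
  have hsumset := eventually_mem_sum_of_dvd (A := fun i => {x | b i + x ∈ A i}) hb hε hG htranslate
  filter_upwards [(tendsto_sub_atTop_nat (∑ i, b i)).eventually hsumset,
    eventually_ge_atTop (∑ i, b i)] with n hn hle hmod
  obtain ⟨g, hg, hsum⟩ := (Set.mem_fintype_sum _ _).mp (hn ((Nat.modEq_iff_dvd' hle).mp hmod))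
  refine (Set.mem_fintype_sum _ _).mpr ⟨fun i => b i + g i, hg, ?_⟩
  rw [Finset.sum_add_distrib, hsum, Nat.add_sub_cancel' hle]

end Sumsets

section Bases

lemma isAsymptoticBasisOfOrder_iff {A : Set ℕ} {h : ℕ} :
    IsAsymptoticBasisOfOrder A h ↔ ∀ᶠ n in atTop, n ∈ ∑ _i : Fin h, A := by
  simp only [IsAsymptoticBasisOfOrder, Set.mem_fintype_sum, exists_prop]

lemma exists_sum_natCast_eq_of_isAsymptoticBasisOfOrder {A : Set ℕ} {a a' h N : ℕ} [NeZero N]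
    (hA : IsAsymptoticBasisOfOrder A h) (ha' : a' ∈ A \ {a}) (hcast : (a' : ZMod N) = a)
    (r : ZMod N) : ∃ b : Fin h → ℕ, (∀ i, b i ∈ A \ {a}) ∧ ((∑ i, b i : ℕ) : ZMod N) = r := by
  obtain ⟨n₀, hn₀⟩ := eventually_atTop.mp hA
  obtain ⟨c, hcA, hsum⟩ := hn₀ (r.val + n₀ * N)
    ((Nat.le_mul_of_pos_right n₀ (NeZero.pos N)).trans (Nat.le_add_left _ _))
  refine ⟨fun i => if c i = a then a' else c i, fun i => ?_, ?_⟩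
  · dsimp only
    split_ifs with h
    · exact ha'
    · exact ⟨hcA i, h⟩
  · have hreplace : ∀ i, ((if c i = a then a' else c i : ℕ) : ZMod N) = c i := fun i => by
      split_ifs with h
      · rw [hcast, h]
      · rfl
    rw [Nat.cast_sum, Finset.sum_congr rfl fun i _ => hreplace i, ← Nat.cast_sum, hsum]
    simp

lemma countingFn_le_countBelow_sdiff_singleton (A : Set ℕ) (a n : ℕ) :
    countingFn A n ≤ countBelow (A \ {a}) n + 2 := by
  have hsub : A ∩ Set.Icc 1 n ⊆ insert n (insert a ((A \ {a}) ∩ Set.Iio n)) := by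
    rintro x ⟨hx, -, hxn⟩
    by_cases hxa : x = a
    · exact Or.inr (Or.inl hxa)
    · exact hxn.eq_or_lt.imp id fun hlt => Or.inr ⟨⟨hx, hxa⟩, hlt⟩
  calc countingFn A n ≤ (insert n (insert a ((A \ {a}) ∩ Set.Iio n))).ncard :=
        Set.ncard_le_ncard hsub
    _ ≤ (insert a ((A \ {a}) ∩ Set.Iio n)).ncard + 1 := Set.ncard_insert_le _ _
    _ ≤ countBelow (A \ {a}) n + 2 := Nat.add_le_add_right (Set.ncard_insert_le _ _) 1

variable {A : Set ℕ} {c : ℝ}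

lemma infinite_of_eventually_mul_le_countingFn (hc : 0 < c)
    (hcount : ∀ᶠ n : ℕ in atTop, c * n ≤ countingFn A n) : A.Infinite := by
  intro hfin
  obtain ⟨n, hn, hlarge⟩ := (hcount.and
    ((tendsto_natCast_atTop_atTop (R := ℝ)).eventually_gt_atTop (A.ncard / c))).exists
  have hbound : (countingFn A n : ℝ) ≤ A.ncard := by
    exact_mod_cast Set.ncard_le_ncard Set.inter_subset_left hfin
  rw [div_lt_iff₀' hc] at hlarge
  linarith

lemma exists_isAsymptoticBasisOfOrder_sdiff_singleton {k : ℕ} [NeZero k]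
    (hA : IsAsymptoticBasisOfOrder A (k + 1)) (hc : 1 < (k + 1) * c)
    (hcount : ∀ᶠ n : ℕ in atTop, c * n ≤ countingFn A n) :
    ∃ a ∈ A, IsAsymptoticBasisOfOrder (A \ {a}) (k + 1) := by
  obtain ⟨ε, hε, hεc⟩ : ∃ ε : ℝ, 0 < ε ∧ (k + 1) * c = 1 + 3 * ε :=
    ⟨((k + 1) * c - 1) / 3, by linarith, by ring⟩
  obtain ⟨G, hG⟩ := exists_nat_ge (4 * k / ε)
  rw [div_le_iff₀' hε] at hG
  have : NeZero G.factorial := ⟨G.factorial_ne_zero⟩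
  have hc₀ : 0 < c := pos_of_mul_pos_right (zero_lt_one.trans hc) (by positivity)
  obtain ⟨a, ha, a', ha', hne, hcast⟩ :=
    (infinite_of_eventually_mul_le_countingFn hc₀ hcount).exists_ne_map_eq_of_mapsTo
      (f := (Nat.cast : ℕ → ZMod G.factorial)) (Set.mapsTo_univ _ _) Set.finite_univ
  have hdense : ∀ᶠ m : ℕ in atTop,
      (1 + 2 * ε) * m ≤ ∑ _i : Fin (k + 1), (countBelow (A \ {a}) m : ℝ) := by
    filter_upwards [hcount, (tendsto_natCast_atTop_atTop (R := ℝ)).eventually_ge_atTop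
      ((k + 1) * 2 / ε)] with m hm hlarge
    have hremove : (countingFn A m : ℝ) ≤ countBelow (A \ {a}) m + 2 := by
      exact_mod_cast countingFn_le_countBelow_sdiff_singleton A a m
    have := mul_le_mul_of_nonneg_left (hm.trans hremove) (by positivity : (0 : ℝ) ≤ k + 1)
    rw [← mul_assoc, hεc] at this
    rw [div_le_iff₀' hε] at hlarge
    simp only [Finset.sum_const, Finset.card_univ, Fintype.card_fin, nsmul_eq_mul, Nat.cast_add,
      Nat.cast_one]
    linarith
  have hresidues : ∀ r : ZMod G.factorial, ∀ᶠ n : ℕ in atTop,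
      (n : ZMod G.factorial) = r → n ∈ ∑ _i : Fin (k + 1), A \ {a} := fun r => by
    obtain ⟨b, hb, hbr⟩ := exists_sum_natCast_eq_of_isAsymptoticBasisOfOrder hA
      ⟨ha', hne.symm⟩ hcast.symm r
    filter_upwards [eventually_mem_sum_of_modEq hb hε hG hdense] with n hn hnr
    exact hn ((ZMod.natCast_eq_natCast_iff _ _ _).mp (hbr.trans hnr.symm))
  refine ⟨a, ha, isAsymptoticBasisOfOrder_iff.mpr ?_⟩
  exact (eventually_all.mpr hresidues).mono fun n hn => hn n rfl

end Bases

theorem nathanson_sarkozy_density_bound (h : ℕ) (hh : 2 ≤ h) (A : Set ℕ)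
    (hA : IsMinimalAsymptoticBasisOfOrder A h) :
    lowerDensity A ≤ 1 / (h : ℝ) := by
  by_contra! hlt
  obtain ⟨k, rfl⟩ : ∃ k, h = k + 1 := ⟨h - 1, by omega⟩
  have : NeZero k := ⟨by omega⟩
  obtain ⟨c, hc, hcA⟩ := exists_between hlt
  have hbdd : IsBoundedUnder (· ≥ ·) atTop fun n : ℕ => (countingFn A n : ℝ) / n :=
    isBoundedUnder_of ⟨0, fun n => by positivity⟩
  have hcount : ∀ᶠ n : ℕ in atTop, c * n ≤ countingFn A n := by
    filter_upwards [eventually_lt_of_lt_liminf hcA hbdd, eventually_gt_atTop 0] with n hn hpos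
    exact ((lt_div_iff₀ (by exact_mod_cast hpos)).mp hn).le
  rw [div_lt_iff₀' (by positivity), Nat.cast_succ] at hc
  obtain ⟨a, ha, hbasis⟩ := exists_isAsymptoticBasisOfOrder_sdiff_singleton hA.1 hc hcount
  exact hA.2 _ (Set.sdiff_singleton_ssubset.mpr ha) hbasis
end
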